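/- arXiv:1411.6791 — 4 statements merged into one kernel-verified Lean document; each statement's English description precedes it below -/
import Mathlib

section
/- Let $R > 0$ and for $0 \le \gamma \le R$ let $A_s(\gamma) = 2R^2 \arccos\!\big(\tfrac{\gamma}{2R}\big) - \gamma\sqrt{R^2 - \tfrac{\gamma^2}{4}}$. Then $\int_0^R \big(\pi R^2 - A_s(r)\big)\, \tfrac{2r}{R^2}\, dr = \tfrac{3\sqrt{3}}{4} R^2$. (Numerically, $\tfrac{3\sqrt{3}}{4} \approx 1.30$, giving the paper's claim $\mathbb{E}[A_{v\setminus i} \mid v \in \mathcal{N}_i] \approx 1.30\, R^2$.) -/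
open Real in
/-- Expected complementary area (Lemma 3(a) of the paper): with
`A_s(γ) = 2R²·arccos(γ/(2R)) − γ·√(R² − γ²/4)` the lens area of two radius-`R`
disks at center distance `γ`, one has
`∫₀^R (πR² − A_s(r)) · (2r/R²) dr = (3√3/4)·R² ≈ 1.30 R²`. -/
theorem expected_complement_area (R : ℝ) (hR : 0 < R) :
    ∫ r in (0:ℝ)..R,
        (π * R ^ 2 - (2 * R ^ 2 * Real.arccos (r / (2 * R)) -
          r * Real.sqrt (R ^ 2 - r ^ 2 / 4))) * (2 * r / R ^ 2) =
      3 * Real.sqrt 3 / 4 * R ^ 2 := by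
  have hderiv : ∀ r ∈ Set.uIcc (0:ℝ) R, HasDerivAt (fun r : ℝ =>
      π * r ^ 2 - 2 * r ^ 2 * Real.arccos (r / (2 * R)) + 2 * R ^ 2 * Real.arccos (r / (2 * R))
        + r * Real.sqrt (R ^ 2 - r ^ 2 / 4)
        + r ^ 3 * Real.sqrt (R ^ 2 - r ^ 2 / 4) / (2 * R ^ 2))
      ((π * R ^ 2 - (2 * R ^ 2 * Real.arccos (r / (2 * R)) -
          r * Real.sqrt (R ^ 2 - r ^ 2 / 4))) * (2 * r / R ^ 2)) r := by
    intro r hr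
    rw [Set.uIcc_of_le hR.le] at hr
    obtain ⟨h0, h1⟩ := hr
    have hpos : 0 < R ^ 2 - r ^ 2 / 4 := by nlinarith
    have hx0 : 0 ≤ r / (2 * R) := by positivity
    have hx1 : r / (2 * R) < 1 := by
      rw [div_lt_one (by positivity)]; linarith
    have hsq : Real.sqrt (1 - (r / (2 * R)) ^ 2) = Real.sqrt (R ^ 2 - r ^ 2 / 4) / R := by
      have e : Real.sqrt (R ^ 2 - r ^ 2 / 4) / R
          = Real.sqrt ((R ^ 2 - r ^ 2 / 4) / R ^ 2) := by
        rw [Real.sqrt_div hpos.le, Real.sqrt_sq hR.le]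
      rw [e]
      congr 1
      field_simp
      ring
    have hA : HasDerivAt (fun r : ℝ => Real.arccos (r / (2 * R)))
        (-(1 / (2 * Real.sqrt (R ^ 2 - r ^ 2 / 4)))) r := by
      have h := (Real.hasDerivAt_arccos (x := r / (2 * R)) (by linarith) hx1.ne).comp r
        ((hasDerivAt_id r).div_const (2 * R))
      rw [hsq] at h
      refine h.congr_deriv ?_
      have := Real.sqrt_pos.2 hpos
      field_simp
    have hS : HasDerivAt (fun r : ℝ => Real.sqrt (R ^ 2 - r ^ 2 / 4))
        (-(r / (4 * Real.sqrt (R ^ 2 - r ^ 2 / 4)))) r := by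
      have h := (((hasDerivAt_pow 2 r).div_const 4).const_sub (R ^ 2)).sqrt hpos.ne'
      refine h.congr_deriv ?_
      have := Real.sqrt_pos.2 hpos
      field_simp
      norm_num
    have hp := hasDerivAt_pow 2 r
    have h := (((((hp.const_mul π).sub ((hp.const_mul 2).mul hA)).add
      (hA.const_mul (2 * R ^ 2))).add ((hasDerivAt_id r).mul hS)).add
      (((hasDerivAt_pow 3 r).mul hS).div_const (2 * R ^ 2)))
    refine h.congr_deriv ?_
    have hs := Real.sqrt_pos.2 hpos
    have hs2 := Real.sq_sqrt hpos.le
    simp only [id]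
    generalize Real.sqrt (R ^ 2 - r ^ 2 / 4) = s at *
    generalize Real.arccos (r / (2 * R)) = A at *
    have hr2 : r ^ 2 = 4 * (R ^ 2 - s ^ 2) := by linarith
    push_cast
    field_simp
    grind
  rw [intervalIntegral.integral_eq_sub_of_hasDerivAt hderiv]
  · have e1 : R / (2 * R) = 1 / 2 := by field_simp
    have e2 : Real.arccos (1 / 2) = π / 3 := by
      rw [← Real.cos_pi_div_three]
      exact Real.arccos_cos (by positivity) (by linarith [Real.pi_pos])
    have e3 : Real.sqrt (R ^ 2 - R ^ 2 / 4) = Real.sqrt 3 / 2 * R := by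
      rw [Real.sqrt_eq_iff_mul_self_eq_of_pos (by positivity)]
      have := Real.mul_self_sqrt (show (0:ℝ) ≤ 3 by norm_num)
      grind
    simp only [e1, e2, e3, zero_div, Real.arccos_zero]
    field_simp
    ring
  · apply Continuous.intervalIntegrable
    have := Real.continuous_arccos
    fun_prop
end

section
/- Let $R > 0$ and for $0 \le \gamma \le R$ let $A_s(\gamma) = 2R^2 \arccos\!\big(\tfrac{\gamma}{2R}\big) - \gamma\sqrt{R^2 - \tfrac{\gamma^2}{4}}$. Then $\int_0^R A_s(r)\, \tfrac{2r}{R^2}\, dr = \big(\pi - \tfrac{3\sqrt{3}}{4}\big) R^2$. (Numerically, $\pi - \tfrac{3\sqrt{3}}{4} \approx 1.84$, giving the paper's claim $\mathbb{E}[K_{ij}] \approx 1.84\, n$.) -/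
/-- Expected intersection area (Lemma 3(c) of the paper): with
`A_s(γ) = 2R²·arccos(γ/(2R)) − γ·√(R² − γ²/4)` the lens area of two radius-`R`
disks at center distance `γ`, one has
`∫₀^R A_s(r) · (2r/R²) dr = (π − 3√3/4)·R² ≈ 1.84 R²`. -/
theorem expected_intersection_area (R : ℝ) (hR : 0 < R) :
    ∫ r in (0:ℝ)..R,
        (2 * R ^ 2 * Real.arccos (r / (2 * R)) -
          r * Real.sqrt (R ^ 2 - r ^ 2 / 4)) * (2 * r / R ^ 2) =
      (Real.pi - 3 * Real.sqrt 3 / 4) * R ^ 2 := by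
  have hderiv : ∀ r ∈ Set.uIcc 0 R, HasDerivAt
      (fun r : ℝ => (2 * r ^ 2 - 2 * R ^ 2) * Real.arccos (r / (2 * R))
        - (r + r ^ 3 / (2 * R ^ 2)) * Real.sqrt (R ^ 2 - r ^ 2 / 4))
      ((2 * R ^ 2 * Real.arccos (r / (2 * R)) -
          r * Real.sqrt (R ^ 2 - r ^ 2 / 4)) * (2 * r / R ^ 2)) r := by
    intro r hr
    rw [Set.uIcc_of_le hR.le] at hr
    obtain ⟨h0, h1⟩ := hr
    have hpos : 0 < R ^ 2 - r ^ 2 / 4 := by nlinarith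
    have hs : 0 < Real.sqrt (R ^ 2 - r ^ 2 / 4) := Real.sqrt_pos.mpr hpos
    have hss : Real.sqrt (R ^ 2 - r ^ 2 / 4) ^ 2 = R ^ 2 - r ^ 2 / 4 := Real.sq_sqrt hpos.le
    have hq0 : 0 ≤ r / (2 * R) := by positivity
    have hq1 : r / (2 * R) < 1 := by
      rw [div_lt_one (by positivity)]; linarith
    have hsq : Real.sqrt (1 - (r / (2 * R)) ^ 2) = Real.sqrt (R ^ 2 - r ^ 2 / 4) / R := by
      rw [Real.sqrt_eq_iff_mul_self_eq_of_pos (by positivity), ← pow_two, div_pow, hss]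
      field_simp
      ring
    have ha : HasDerivAt (fun r : ℝ => Real.arccos (r / (2 * R)))
        (-(1 / (2 * Real.sqrt (R ^ 2 - r ^ 2 / 4)))) r := by
      have h := (Real.hasDerivAt_arccos (x := r / (2 * R)) (by linarith) hq1.ne).comp r
        ((hasDerivAt_id r).div_const (2 * R))
      rw [hsq] at h
      refine HasDerivAt.congr_deriv h ?_
      field_simp
    have hsd : HasDerivAt (fun r : ℝ => Real.sqrt (R ^ 2 - r ^ 2 / 4))
        (-(r / (4 * Real.sqrt (R ^ 2 - r ^ 2 / 4)))) r := by
      have h := ((((hasDerivAt_id r).pow 2).div_const 4).const_sub (R ^ 2)).sqrt hpos.ne'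
      refine HasDerivAt.congr_deriv h ?_
      simp only [id]
      field_simp
      norm_num
    have hp : HasDerivAt (fun r : ℝ => 2 * r ^ 2 - 2 * R ^ 2) (4 * r) r := by
      have h := (((hasDerivAt_id r).pow 2).const_mul 2).sub_const (2 * R ^ 2)
      refine HasDerivAt.congr_deriv h ?_
      simp only [id]
      norm_num
      ring
    have hq : HasDerivAt (fun r : ℝ => r + r ^ 3 / (2 * R ^ 2)) (1 + 3 * r ^ 2 / (2 * R ^ 2)) r := by
      have h := (hasDerivAt_id r).add (((hasDerivAt_id r).pow 3).div_const (2 * R ^ 2))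
      refine HasDerivAt.congr_deriv h ?_
      simp only [id]
      norm_num
    have h := (hp.mul ha).sub (hq.mul hsd)
    refine HasDerivAt.congr_deriv h ?_
    generalize Real.sqrt (R ^ 2 - r ^ 2 / 4) = s at hs hss ⊢
    generalize Real.arccos (r / (2 * R)) = a
    field_simp
    have h4 : R ^ 2 = s ^ 2 + r ^ 2 / 4 := by linarith
    ring_nf
    try simp only [show R ^ 4 = (R ^ 2) ^ 2 by ring, h4]
    try ring
  rw [intervalIntegral.integral_eq_sub_of_hasDerivAt hderiv]
  · have e : Real.sqrt (R ^ 2 - R ^ 2 / 4) = Real.sqrt 3 / 2 * R := by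
      rw [Real.sqrt_eq_iff_mul_self_eq_of_pos (by positivity)]
      have := Real.sq_sqrt (show (0:ℝ) ≤ 3 by norm_num)
      linear_combination R ^ 2 / 4 * this
    rw [e]
    simp only [zero_div, Real.arccos_zero]
    field_simp
    ring
  · apply Continuous.intervalIntegrable
    have := Real.continuous_arccos
    fun_prop
end

section
/- Let $T_d > 0$, $\lambda_c > 0$, and $0 \le \Delta t \le T_d$. Let $S$ be uniformly distributed on $[0, T_d]$ and $X$ be exponentially distributed with rate $\lambda_c$, with $S$ and $X$ independent. Then $\Pr(S + X > \Delta t) = 1 - \tfrac{\Delta t}{T_d} + \tfrac{1 - e^{-\lambda_c \Delta t}}{\lambda_c T_d}$. -/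
open MeasureTheory ProbabilityTheory

lemma expMeasure_Ioi_aux {r : ℝ} (hr : 0 < r) (y : ℝ) :
    expMeasure r (Set.Ioi y) = ENNReal.ofReal (Real.exp (-(r * max y 0))) := by
  haveI := isProbabilityMeasure_expMeasure hr
  have h1 : (expMeasure r).real (Set.Iic y) = if 0 ≤ y then 1 - Real.exp (-(r * y)) else 0 := by
    rw [← cdf_eq_real, cdf_expMeasure_eq hr]
  have h2 := probReal_compl_eq_one_sub (μ := expMeasure r) (measurableSet_Iic (a := y))
  rw [Set.compl_Iic, h1] at h2
  rw [← ofReal_measureReal, h2]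
  congr 1
  split_ifs with h
  · rw [max_eq_left h]; ring
  · rw [max_eq_right (by linarith)]; simp

lemma integral_aux {Td lc dt : ℝ} (hlc : 0 < lc) (hdt0 : 0 ≤ dt) (hdt : dt ≤ Td) :
    ∫ s in (0:ℝ)..Td, Real.exp (-(lc * max (dt - s) 0)) =
      (1 - Real.exp (-lc * dt)) / lc + (Td - dt) := by
  have hc : Continuous fun s : ℝ => Real.exp (-(lc * max (dt - s) 0)) := by fun_prop
  rw [← intervalIntegral.integral_add_adjacent_intervals (b := dt)
    (hc.intervalIntegrable _ _) (hc.intervalIntegrable _ _)]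
  congr 1
  · have : ∀ s ∈ Set.uIcc 0 dt, HasDerivAt (fun s => Real.exp (-(lc * (dt - s))) / lc)
        (Real.exp (-(lc * max (dt - s) 0))) s := by
      intro s hs
      rw [Set.uIcc_of_le hdt0] at hs
      rw [max_eq_left (by linarith [hs.2])]
      have h := (((((hasDerivAt_id s).const_sub dt).const_mul lc).neg).exp).div_const lc
      convert! h using 1
      simp only [id]
      field_simp
      rfl
    rw [intervalIntegral.integral_eq_sub_of_hasDerivAt this (hc.intervalIntegrable _ _)]
    simp
    ring
  · have : Set.EqOn (fun s : ℝ => Real.exp (-(lc * max (dt - s) 0))) (fun _ => 1)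
        (Set.uIcc dt Td) := by
      intro s hs
      rw [Set.uIcc_of_le hdt] at hs
      simp only
      rw [max_eq_right (by linarith [hs.1])]
      simp
    rw [intervalIntegral.integral_congr this]
    simp



/-- Paper's switching lemma: if `S` is uniform on `[0, T_d]`, `X` is exponential with
rate `λ_c`, and `S, X` are independent, then for `0 ≤ Δt ≤ T_d`,
`Pr(S + X > Δt) = 1 − Δt/T_d + (1 − e^{−λ_c Δt})/(λ_c T_d)`. -/
theorem switching_lemma {Ω : Type*} [MeasureSpace Ω] [IsProbabilityMeasure (ℙ : Measure Ω)]
    (Td lc dt : ℝ) (hTd : 0 < Td) (hlc : 0 < lc) (hdt0 : 0 ≤ dt) (hdt : dt ≤ Td)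
    (S X : Ω → ℝ) (hSm : Measurable S) (hXm : Measurable X)
    (hS : Measure.map S ℙ = (ENNReal.ofReal Td)⁻¹ • volume.restrict (Set.Icc 0 Td))
    (hX : Measure.map X ℙ = expMeasure lc)
    (hindep : IndepFun S X ℙ) :
    ℙ {ω | dt < S ω + X ω} =
      ENNReal.ofReal (1 - dt / Td + (1 - Real.exp (-lc * dt)) / (lc * Td)) := by
  haveI := isProbabilityMeasure_expMeasure hlc
  have hA : MeasurableSet {p : ℝ × ℝ | dt < p.1 + p.2} :=
    measurableSet_lt measurable_const (measurable_fst.add measurable_snd)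
  have h1 : (ℙ : Measure Ω) {ω | dt < S ω + X ω} =
      ((Measure.map S ℙ).prod (Measure.map X ℙ)) {p : ℝ × ℝ | dt < p.1 + p.2} := by
    rw [← (indepFun_iff_map_prod_eq_prod_map_map hSm.aemeasurable hXm.aemeasurable).1 hindep,
      Measure.map_apply (hSm.prodMk hXm) hA]
    rfl
  have hset : ∀ s : ℝ, Prod.mk s ⁻¹' {p : ℝ × ℝ | dt < p.1 + p.2} = Set.Ioi (dt - s) := by
    intro s
    ext x
    simp [sub_lt_iff_lt_add']
  have hc : Continuous fun s : ℝ => Real.exp (-(lc * max (dt - s) 0)) := by fun_prop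
  rw [h1, hX, Measure.prod_apply hA, hS]
  simp only [hset, expMeasure_Ioi_aux hlc]
  rw [lintegral_smul_measure, ← ofReal_integral_eq_lintegral_ofReal
    (hc.continuousOn.integrableOn_Icc) (Filter.Eventually.of_forall fun s => (Real.exp_pos _).le),
    integral_Icc_eq_integral_Ioc, ← intervalIntegral.integral_of_le hTd.le,
    integral_aux hlc hdt0 hdt, ← ENNReal.ofReal_inv_of_pos hTd, smul_eq_mul,
    ← ENNReal.ofReal_mul (inv_nonneg.2 hTd.le)]
  congr 1
  field_simp
  ring
end

section
/- Let $T_d > 0$, $\lambda_c > 0$, $\lambda_w > 0$, and $w \in [0, 1]$. Define $f(t) = w\,\lambda_c e^{-\lambda_c t} + (1 - w)\,\tfrac{1 - e^{-\lambda_c t}}{T_d}$ for $t \in [0, T_d]$, and $g(x) = \tfrac{1 - e^{-x T_d}}{x}$ for $x > 0$. Then $\int_0^{T_d} f(t)\, dt > 0$ and $$\frac{\int_0^{T_d} e^{-\lambda_w t} f(t)\, dt}{\int_0^{T_d} f(t)\, dt} \;=\; \frac{\big(w\lambda_c - \tfrac{1-w}{T_d}\big)\, g(\lambda_c + \lambda_w)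 + \tfrac{1-w}{T_d}\, g(\lambda_w)}{1 - w + \big(w\lambda_c - \tfrac{1-w}{T_d}\big)\, g(\lambda_c)}.$$ -/
theorem int_exp_aux (x T : ℝ) (hx : 0 < x) :
    ∫ t in (0:ℝ)..T, Real.exp (-x * t) = (1 - Real.exp (-x * T)) / x := by
  have hd : ∀ t ∈ Set.uIcc 0 T,
      HasDerivAt (fun t : ℝ => -Real.exp (-x * t) / x) (Real.exp (-x * t)) t := by
    intro t _
    have h1 : HasDerivAt (fun t : ℝ => -x * t) (-x) t := by
      simpa using (hasDerivAt_id t).const_mul (-x)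
    have h2 := (h1.exp.neg).div_const x
    exact h2.congr_deriv (by field_simp)
  rw [intervalIntegral.integral_eq_sub_of_hasDerivAt hd
    (Continuous.intervalIntegrable (by fun_prop) _ _)]
  simp
  ring

/-- Closed form (paper's equation (8)) for `p_ctrl⋆`: with (unnormalized) density
`f(t) = w·λc·e^{−λc t} + (1−w)·(1 − e^{−λc t})/T_d` on `[0, T_d]` and
`g(x) = (1 − e^{−x T_d})/x`, the total mass `∫₀^{T_d} f` is positive and
`(∫₀^{T_d} e^{−λw t} f(t) dt) / (∫₀^{T_d} f(t) dt)
  = ((w λc − (1−w)/T_d) g(λc+λw) + ((1−w)/T_d) g(λw)) / (1 − w + (w λc − (1−w)/T_d) g(λc))`. -/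
theorem pctrl_star_closed_form (Td lc lw w : ℝ)
    (hTd : 0 < Td) (hlc : 0 < lc) (hlw : 0 < lw) (hw0 : 0 ≤ w) (hw1 : w ≤ 1) :
    (0 < ∫ t in (0:ℝ)..Td,
        (w * lc * Real.exp (-lc * t) + (1 - w) * (1 - Real.exp (-lc * t)) / Td)) ∧
    (∫ t in (0:ℝ)..Td, Real.exp (-lw * t) *
        (w * lc * Real.exp (-lc * t) + (1 - w) * (1 - Real.exp (-lc * t)) / Td)) /
      (∫ t in (0:ℝ)..Td,
        (w * lc * Real.exp (-lc * t) + (1 - w) * (1 - Real.exp (-lc * t)) / Td)) =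
      ((w * lc - (1 - w) / Td) * ((1 - Real.exp (-(lc + lw) * Td)) / (lc + lw)) +
          (1 - w) / Td * ((1 - Real.exp (-lw * Td)) / lw)) /
        (1 - w + (w * lc - (1 - w) / Td) * ((1 - Real.exp (-lc * Td)) / lc)) := by
  have hc : Continuous (fun t : ℝ => w * lc * Real.exp (-lc * t) +
      (1 - w) * (1 - Real.exp (-lc * t)) / Td) := by fun_prop
  constructor
  · apply intervalIntegral.intervalIntegral_pos_of_pos_on (hc.intervalIntegrable _ _) _ hTd
    intro t ht
    have h1 : Real.exp (-lc * t) < 1 := by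
      rw [Real.exp_lt_one_iff]
      nlinarith [mul_pos hlc ht.1]
    have h2 : 0 < 1 - Real.exp (-lc * t) := by linarith
    rcases hw0.eq_or_lt with h | h
    · subst h
      simp only [zero_mul, zero_add, sub_zero, one_mul]
      positivity
    · have h3 : 0 ≤ 1 - w := by linarith
      positivity
  · have e1 : ∀ t : ℝ, w * lc * Real.exp (-lc * t) + (1 - w) * (1 - Real.exp (-lc * t)) / Td
        = (w * lc - (1 - w) / Td) * Real.exp (-lc * t) + (1 - w) / Td := by
      intro t; ring
    have e2 : ∀ t : ℝ, Real.exp (-lw * t) *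
        ((w * lc - (1 - w) / Td) * Real.exp (-lc * t) + (1 - w) / Td)
        = (w * lc - (1 - w) / Td) * Real.exp (-(lc + lw) * t)
          + (1 - w) / Td * Real.exp (-lw * t) := by
      intro t
      have : -(lc + lw) * t = -lc * t + -lw * t := by ring
      rw [this, Real.exp_add]; ring
    simp only [e1, e2]
    rw [intervalIntegral.integral_add (Continuous.intervalIntegrable (by fun_prop) _ _)
        (Continuous.intervalIntegrable (by fun_prop) _ _),
      intervalIntegral.integral_add (Continuous.intervalIntegrable (by fun_prop) _ _)
        (Continuous.intervalIntegrable (by fun_prop) _ _)]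
    simp only [intervalIntegral.integral_const_mul, intervalIntegral.integral_const]
    rw [int_exp_aux _ _ hlc, int_exp_aux _ _ hlw, int_exp_aux _ _ (add_pos hlc hlw)]
    congr 1
    have : (Td - 0) • ((1 - w) / Td) = 1 - w := by
      rw [smul_eq_mul]; field_simp; ring
    rw [this]; ring
end
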